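/- Let X and Y be finite-dimensional subspaces of a real inner product space H with dim X = dim Y < ∞. Then dist(X, Y) = dist(Y, X), where dist(X,Y) = sup_{u∈X, ||u||=1} inf_{v∈Y} ||u − v||. -/

import Mathlib

/-- Distance from subspace `X` to subspace `Y`: supremum over unit vectors of `X` of the
distance to `Y`. -/
noncomputable def distSub {H : Type*} [NormedAddCommGroup H] [InnerProductSpace ℝ H]
    (X Y : Submodule ℝ H) : ℝ :=
  ⨆ u : {u : H // u ∈ X ∧ ‖u‖ = 1}, ⨅ v : Y, ‖u.1 - (v : H)‖

/-! By Pythagoras, an upper bound `d` on the distance from `X` to `Y` is the same as the lower bound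
`√(1 - d ^ 2)` for the orthogonal projection `X → Y`. The projections `X → Y` and `Y → X` are
adjoint to each other, and a lower bound for a surjective map is inherited by its adjoint. Equality
of dimensions provides the surjectivity, since a positive lower bound forces injectivity. -/

section LowerBound

variable {𝕜 E F : Type*} [RCLike 𝕜] {c : ℝ}

theorem mul_norm_le_norm_of_inner_eq_of_surjective
    [SeminormedAddCommGroup E] [InnerProductSpace 𝕜 E]
    [SeminormedAddCommGroup F] [InnerProductSpace 𝕜 F] {T : E → F} {S : F → E}
    (hTS : ∀ x y, inner 𝕜 (T x) y = inner 𝕜 x (S y)) (hT : Function.Surjective T)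
    (hc : ∀ x, c * ‖x‖ ≤ ‖T x‖) (y : F) : c * ‖y‖ ≤ ‖S y‖ := by
  rcases le_or_gt (c * ‖y‖) 0 with hcy | hcy
  · exact hcy.trans (norm_nonneg _)
  have hy : 0 < ‖y‖ := (norm_nonneg y).lt_of_ne' (right_ne_zero_of_mul hcy.ne')
  have hc_pos : 0 < c := pos_of_mul_pos_left hcy hy.le
  obtain ⟨x, rfl⟩ := hT y
  have norm_sq_le : ‖T x‖ * ‖T x‖ ≤ ‖x‖ * ‖S (T x)‖ := by
    rw [← inner_self_eq_norm_mul_norm (𝕜 := 𝕜), hTS]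
    exact re_inner_le_norm x (S (T x))
  refine le_of_mul_le_mul_left ?_ hy
  calc ‖T x‖ * (c * ‖T x‖) = c * (‖T x‖ * ‖T x‖) := by ring
    _ ≤ c * (‖x‖ * ‖S (T x)‖) := by gcongr
    _ = c * ‖x‖ * ‖S (T x)‖ := by ring
    _ ≤ ‖T x‖ * ‖S (T x)‖ := by gcongr; exact hc x

theorem mul_norm_le_norm_of_inner_eq_of_finrank_eq
    [NormedAddCommGroup E] [InnerProductSpace 𝕜 E] [FiniteDimensional 𝕜 E]
    [NormedAddCommGroup F] [InnerProductSpace 𝕜 F] [FiniteDimensional 𝕜 F]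
    (hdim : Module.finrank 𝕜 E = Module.finrank 𝕜 F) {T : E →ₗ[𝕜] F} {S : F → E}
    (hTS : ∀ x y, inner 𝕜 (T x) y = inner 𝕜 x (S y))
    (hc : ∀ x, c * ‖x‖ ≤ ‖T x‖) (y : F) : c * ‖y‖ ≤ ‖S y‖ := by
  rcases le_or_gt c 0 with hc_nonpos | hc_pos
  · exact (mul_nonpos_of_nonpos_of_nonneg hc_nonpos (norm_nonneg y)).trans (norm_nonneg _)
  have T_injective : Function.Injective T := by
    refine (injective_iff_map_eq_zero T).2 fun x hx => norm_le_zero_iff.1 ?_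
    have hcx : c * ‖x‖ ≤ 0 := by simpa only [hx, norm_zero] using hc x
    exact nonpos_of_mul_nonpos_right hcx hc_pos
  exact mul_norm_le_norm_of_inner_eq_of_surjective hTS
    ((LinearMap.injective_iff_surjective_of_finrank_eq_finrank hdim).1 T_injective) hc y

end LowerBound

section Projection

variable {𝕜 H : Type*} [RCLike 𝕜] [NormedAddCommGroup H] [InnerProductSpace 𝕜 H]

theorem inner_orthogonalProjectionOnto_left_eq_right (X Y : Submodule 𝕜 H)
    [X.HasOrthogonalProjection] [Y.HasOrthogonalProjection] (x : X) (y : Y) :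
    inner 𝕜 (Y.orthogonalProjectionOnto (x : H)) y =
      inner 𝕜 x (X.orthogonalProjectionOnto (y : H)) := by
  rw [Y.inner_orthogonalProjectionOnto_eq_of_mem_right,
    X.inner_orthogonalProjectionOnto_eq_of_mem_left]

theorem norm_sq_eq_norm_orthogonalProjectionOnto_sq_add_norm_sub_sq (Y : Submodule 𝕜 H)
    [Y.HasOrthogonalProjection] (x : H) :
    ‖x‖ ^ 2 = ‖Y.orthogonalProjectionOnto x‖ ^ 2 + ‖x - Y.starProjection x‖ ^ 2 := by
  rw [Y.norm_sq_eq_add_norm_sq_starProjection x, Y.starProjection_orthogonal_val]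
  rfl

theorem norm_sub_starProjection_le_norm (Y : Submodule 𝕜 H) [Y.HasOrthogonalProjection] (x : H) :
    ‖x - Y.starProjection x‖ ≤ ‖x‖ := by
  rw [← Y.starProjection_orthogonal_val]
  exact Yᗮ.norm_starProjection_apply_le x

theorem norm_sub_starProjection_le_mul_norm_iff (Y : Submodule 𝕜 H) [Y.HasOrthogonalProjection]
    {d : ℝ} (hd : 0 ≤ d) (x : H) :
    ‖x - Y.starProjection x‖ ≤ d * ‖x‖ ↔
      √(1 - d ^ 2) * ‖x‖ ≤ ‖Y.orthogonalProjectionOnto x‖ := by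
  have pythagoras := norm_sq_eq_norm_orthogonalProjectionOnto_sq_add_norm_sub_sq Y x
  calc ‖x - Y.starProjection x‖ ≤ d * ‖x‖
      ↔ ‖x - Y.starProjection x‖ ^ 2 ≤ (d * ‖x‖) ^ 2 :=
        (sq_le_sq₀ (norm_nonneg _) (by positivity)).symm
    _ ↔ (1 - d ^ 2) * ‖x‖ ^ 2 ≤ ‖Y.orthogonalProjectionOnto x‖ ^ 2 := by
        constructor <;> intro h <;> linarith
    _ ↔ √(1 - d ^ 2) * ‖x‖ ≤ ‖Y.orthogonalProjectionOnto x‖ := by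
        rw [← Real.sqrt_le_left (norm_nonneg _), Real.sqrt_mul' _ (sq_nonneg _),
          Real.sqrt_sq (norm_nonneg _)]

end Projection

section DistSub

variable {H : Type*} [NormedAddCommGroup H] [InnerProductSpace ℝ H] (X Y : Submodule ℝ H)

theorem distSub_nonneg : 0 ≤ distSub X Y :=
  Real.iSup_nonneg fun _ => Real.iInf_nonneg fun _ => norm_nonneg _

theorem distSub_eq_iSup_norm_sub_starProjection [Y.HasOrthogonalProjection] :
    distSub X Y = ⨆ u : {u : H // u ∈ X ∧ ‖u‖ = 1}, ‖u.1 - Y.starProjection u.1‖ := by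
  simp only [distSub, Y.starProjection_minimal]

theorem norm_sub_starProjection_le_distSub_mul_norm [Y.HasOrthogonalProjection] (x : X) :
    ‖(x : H) - Y.starProjection x‖ ≤ distSub X Y * ‖x‖ := by
  rcases eq_or_ne x 0 with rfl | hx
  · simp
  have bdd : BddAbove (Set.range fun u : {u : H // u ∈ X ∧ ‖u‖ = 1} =>
      ‖u.1 - Y.starProjection u.1‖) := by
    refine ⟨1, Set.forall_mem_range.2 fun u => ?_⟩
    exact (norm_sub_starProjection_le_norm Y u.1).trans_eq u.2.2
  have normalized : ‖‖x‖⁻¹ • (x : H) - Y.starProjection (‖x‖⁻¹ • (x : H))‖ ≤ distSub X Y := by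
    rw [distSub_eq_iSup_norm_sub_starProjection]
    exact le_ciSup bdd ⟨‖x‖⁻¹ • (x : H), X.smul_mem _ x.2, norm_smul_inv_norm (𝕜 := ℝ) (by simpa)⟩
  rwa [map_smul, ← smul_sub, norm_smul, norm_inv, norm_norm,
    inv_mul_le_iff₀ (norm_pos_iff.2 hx), mul_comm] at normalized

theorem distSub_le_iff_norm_sub_starProjection_le [Y.HasOrthogonalProjection] {d : ℝ}
    (hd : 0 ≤ d) :
    distSub X Y ≤ d ↔ ∀ x : X, ‖(x : H) - Y.starProjection x‖ ≤ d * ‖x‖ := by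
  constructor
  · intro h x
    exact (norm_sub_starProjection_le_distSub_mul_norm X Y x).trans (by gcongr)
  · intro h
    rw [distSub_eq_iSup_norm_sub_starProjection]
    refine Real.iSup_le (fun ⟨u, huX, hu⟩ => ?_) hd
    simpa only [Submodule.coe_norm, hu, mul_one] using h ⟨u, huX⟩

theorem distSub_le_iff_sqrt_mul_norm_le [Y.HasOrthogonalProjection] {d : ℝ} (hd : 0 ≤ d) :
    distSub X Y ≤ d ↔ ∀ x : X, √(1 - d ^ 2) * ‖x‖ ≤ ‖Y.orthogonalProjectionOnto (x : H)‖ :=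
  (distSub_le_iff_norm_sub_starProjection_le X Y hd).trans <|
    forall_congr' fun x => norm_sub_starProjection_le_mul_norm_iff Y hd (x : H)

theorem distSub_le_distSub_swap [FiniteDimensional ℝ X] [FiniteDimensional ℝ Y]
    (hdim : Module.finrank ℝ X = Module.finrank ℝ Y) : distSub Y X ≤ distSub X Y := by
  have hd := distSub_nonneg X Y
  have lower_bound := (distSub_le_iff_sqrt_mul_norm_le X Y hd).1 le_rfl
  exact (distSub_le_iff_sqrt_mul_norm_le Y X hd).2 <|
    mul_norm_le_norm_of_inner_eq_of_finrank_eq hdim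
      (T := (Y.orthogonalProjectionOnto : H →ₗ[ℝ] Y).domRestrict X)
      (inner_orthogonalProjectionOnto_left_eq_right X Y) lower_bound

end DistSub

theorem stmt2 {H : Type*} [NormedAddCommGroup H] [InnerProductSpace ℝ H]
    (X Y : Submodule ℝ H) [FiniteDimensional ℝ X] [FiniteDimensional ℝ Y]
    (hdim : Module.finrank ℝ X = Module.finrank ℝ Y) :
    distSub X Y = distSub Y X :=
  le_antisymm (distSub_le_distSub_swap Y X hdim.symm) (distSub_le_distSub_swap X Y hdim)
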